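/- For every positive rational number α, the Lie algebra 𝔤_α carries the data of an invariant generalized complex structure of type 1: there exist linearly independent linear functionals φ₁, φ₂ ∈ 𝔤_α* with φ₁([x,y]) = 0 and φ₂([x,y]) = 0 for all x, y ∈ 𝔤_α (so that the complex 1-form Ω = φ₁ + iφ₂ is closed), and a closed alternating bilinear form ω on 𝔤_α whose restriction to the 6-dimensional subspace ker φ₁ ∩ ker φ₂ is nondegenerate (equivalently, ω³ ∧ Ω ∧ Ω̄ ≠ 0). -/

import Mathlib

/-!
Write `e¹, …, e⁸` for the dual basis and `a` for `α`.  The closed functionals are spanned by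
`e¹, …, e⁴`, and
`ω = (1 + a) e¹⁸ - e³⁷ - (1 + a)(3 + a) e⁴⁶ + (1 + a) e⁵⁷`
is a closed 2-form for every `a` (`omega_closed`).  Taking `φ₁ = e²` and `φ₂ = e³`, the common
kernel is spanned by `e₁, e₄, e₅, e₆, e₇, e₈`, where `ω` restricts to
`(1 + a) (e¹⁸ - (3 + a) e⁴⁶ + e⁵⁷)`.  This is nondegenerate as soon as `a ≠ -1, -3`, in particular
for `a > 0`.  For `a ≠ -1`, `ω` is, up to scale, the only closed 2-form of degree 5 for
the grading of the Lie algebra with weights `1, 1, 2, 2, 2, 3, 3, 4`.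
-/

noncomputable section

/-- Structure constants of the Lie algebra `g_alpha` (0-indexed basis `e 0, ..., e 7`
corresponding to `e_1, ..., e_8` in the paper): `gA alpha i j` is the value of the bracket
`[e_i, e_j]` for the listed pairs with `i < j`, and `0` otherwise. -/
def gA (a : ℝ) (i j : Fin 8) : Fin 8 → ℝ :=
  if i = 0 ∧ j = 1 then -(Pi.single 4 1 : Fin 8 → ℝ)
  else if i = 0 ∧ j = 4 then -(Pi.single 5 1 : Fin 8 → ℝ)
  else if i = 1 ∧ j = 3 then (a - 1) • (Pi.single 5 1 : Fin 8 → ℝ)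
  else if i = 0 ∧ j = 3 then (1 + a) • (Pi.single 6 1 : Fin 8 → ℝ)
  else if i = 1 ∧ j = 2 then (Pi.single 6 1 : Fin 8 → ℝ)
  else if i = 1 ∧ j = 4 then -((1 + a) • (Pi.single 6 1 : Fin 8 → ℝ))
  else if i = 0 ∧ j = 5 then -(Pi.single 7 1 : Fin 8 → ℝ)
  else if i = 1 ∧ j = 6 then -(Pi.single 7 1 : Fin 8 → ℝ)
  else if i = 2 ∧ j = 3 then -(Pi.single 7 1 : Fin 8 → ℝ)
  else if i = 3 ∧ j = 4 then (2 : ℝ) • (Pi.single 7 1 : Fin 8 → ℝ)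
  else 0

/-- The skew-symmetric bilinear bracket of `g_alpha`, extended bilinearly from the
structure constants. -/
def gBr (a : ℝ) (x y : Fin 8 → ℝ) : Fin 8 → ℝ :=
  ∑ i : Fin 8, ∑ j : Fin 8, (x i * y j) • (gA a i j - gA a j i)

/-- The distinguished basis vectors `e i = e_{i+1}`. -/
def e (i : Fin 8) : Fin 8 → ℝ := Pi.single i 1

/-- The bracket in coordinates. -/
lemma gBr_eq (a : ℝ) (x y : Fin 8 → ℝ) :
    gBr a x y = ![0, 0, 0, 0,
      -(x 0 * y 1 - x 1 * y 0),
      -(x 0 * y 4 - x 4 * y 0) + (a - 1) * (x 1 * y 3 - x 3 * y 1),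
      (1 + a) * (x 0 * y 3 - x 3 * y 0) + (x 1 * y 2 - x 2 * y 1)
        - (1 + a) * (x 1 * y 4 - x 4 * y 1),
      -(x 0 * y 5 - x 5 * y 0) - (x 1 * y 6 - x 6 * y 1) - (x 2 * y 3 - x 3 * y 2)
        + 2 * (x 3 * y 4 - x 4 * y 3)] := by
  funext k
  fin_cases k <;> simp [gBr, gA, Fin.sum_univ_eight] <;> ring

/-- The 2-form `(1 + a) e¹⁸ - e³⁷ - (1 + a)(3 + a) e⁴⁶ + (1 + a) e⁵⁷`; the coordinates in the
code are 0-indexed. -/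
def omega (a : ℝ) : AlternatingMap ℝ (Fin 8 → ℝ) ℝ (Fin 2) where
  toFun v := (1 + a) * (v 0 0 * v 1 7 - v 0 7 * v 1 0) - (v 0 2 * v 1 6 - v 0 6 * v 1 2)
    - (1 + a) * (3 + a) * (v 0 3 * v 1 5 - v 0 5 * v 1 3)
    + (1 + a) * (v 0 4 * v 1 6 - v 0 6 * v 1 4)
  map_update_add' v i x y := by
    fin_cases i <;> simp [Function.update] <;> ring
  map_update_smul' v i c x := by
    fin_cases i <;> simp [Function.update] <;> ring
  map_eq_zero_of_eq' v i j h hij := by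
    have h01 : v 0 = v 1 := by
      fin_cases i <;> fin_cases j <;> simp_all
    rw [h01]
    ring

lemma omega_apply (a : ℝ) (x y : Fin 8 → ℝ) :
    omega a ![x, y] = (1 + a) * (x 0 * y 7 - x 7 * y 0) - (x 2 * y 6 - x 6 * y 2)
      - (1 + a) * (3 + a) * (x 3 * y 5 - x 5 * y 3) + (1 + a) * (x 4 * y 6 - x 6 * y 4) :=
  rfl

lemma omega_closed (a : ℝ) (x y z : Fin 8 → ℝ) :
    omega a ![gBr a x y, z] + omega a ![gBr a y z, x] + omega a ![gBr a z x, y] = 0 := by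
  simp only [omega_apply, gBr_eq]
  simp
  ring

/-- On the common kernel of `e²` and `e³` the form `omega a` is nondegenerate for
`a ≠ -1, -3`: it pairs each basis vector of the kernel with exactly one other, so it suffices to test against the basis vectors. -/
lemma omega_nondegenerate (a : ℝ) (h1 : 1 + a ≠ 0) (h3 : 3 + a ≠ 0) (x : Fin 8 → ℝ)
    (hx1 : x 1 = 0) (hx2 : x 2 = 0) (hx : x ≠ 0) :
    ∃ y : Fin 8 → ℝ, (y 1 = 0 ∧ y 2 = 0) ∧ omega a ![x, y] ≠ 0 := by
  by_contra! hy
  apply hx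
  have k0 := hy (e 0) (by simp [e])
  have k3 := hy (e 3) (by simp [e])
  have k4 := hy (e 4) (by simp [e])
  have k5 := hy (e 5) (by simp [e])
  have k6 := hy (e 6) (by simp [e])
  have k7 := hy (e 7) (by simp [e])
  simp [omega_apply, e, h1, h3, hx2] at k0 k3 k4 k5 k6 k7
  funext k
  fin_cases k <;> simp [*]

/-- the data of an invariant generalized complex structure of type 1 on
`N_alpha`: two linearly independent closed functionals `φ₁, φ₂` and a closed 2-form `ω`
whose restriction to the 6-dimensional subspace `ker φ₁ ∩ ker φ₂` is nondegenerate. -/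
theorem statement10 (α : ℚ) (hα : 0 < α) :
    ∃ φ₁ φ₂ : Module.Dual ℝ (Fin 8 → ℝ),
      LinearIndependent ℝ ![φ₁, φ₂] ∧
      (∀ x y : Fin 8 → ℝ, φ₁ (gBr (α : ℝ) x y) = 0) ∧
      (∀ x y : Fin 8 → ℝ, φ₂ (gBr (α : ℝ) x y) = 0) ∧
      Module.finrank ℝ ↥(LinearMap.ker φ₁ ⊓ LinearMap.ker φ₂) = 6 ∧
      ∃ ω : AlternatingMap ℝ (Fin 8 → ℝ) ℝ (Fin 2),
        (∀ x y z : Fin 8 → ℝ,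
          ω ![gBr (α : ℝ) x y, z] + ω ![gBr (α : ℝ) y z, x] + ω ![gBr (α : ℝ) z x, y] = 0) ∧
        (∀ x ∈ LinearMap.ker φ₁ ⊓ LinearMap.ker φ₂, x ≠ 0 →
          ∃ y ∈ LinearMap.ker φ₁ ⊓ LinearMap.ker φ₂, ω ![x, y] ≠ 0) := by
  have hα' : (0 : ℝ) < α := by exact_mod_cast hα
  refine ⟨LinearMap.proj 1, LinearMap.proj 2, ?_, ?_, ?_, ?_, omega α, omega_closed α, ?_⟩
  · rw [LinearIndependent.pair_iff]
    intro s t h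
    have hs := LinearMap.congr_fun h (e 1)
    have ht := LinearMap.congr_fun h (e 2)
    simp [e] at hs ht
    exact ⟨hs, ht⟩
  · intro x y
    simp [gBr_eq]
  · intro x y
    simp [gBr_eq]
  · -- Rank-nullity for the surjection `x ↦ (x 1, x 2)` onto `ℝ × ℝ`.
    rw [← LinearMap.ker_prod]
    set f : (Fin 8 → ℝ) →ₗ[ℝ] ℝ × ℝ :=
      (LinearMap.proj 1 : (Fin 8 → ℝ) →ₗ[ℝ] ℝ).prod (LinearMap.proj 2) with hf
    have hsurj : LinearMap.range f = ⊤ := by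
      rw [LinearMap.range_eq_top]
      rintro ⟨s, t⟩
      exact ⟨s • e 1 + t • e 2, by simp [hf, e]⟩
    have h := f.finrank_range_add_finrank_ker
    rw [hsurj, finrank_top] at h
    simp at h
    omega
  · intro x hx hx0
    simp only [Submodule.mem_inf, LinearMap.mem_ker, LinearMap.proj_apply] at hx ⊢
    exact omega_nondegenerate α (by positivity) (by positivity) x hx.1 hx.2 hx0
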